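/- (Fidelity benchmark for equatorial qubit states.) Let Ω := (1/4)(|0⟩⟨0|⊗|0⟩⟨0| + |1⟩⟨1|⊗|1⟩⟨1| + 2|Ψ⁺⟩⟨Ψ⁺|) on ℂ²⊗ℂ², with |Ψ⁺⟩ = (|0⟩⊗|1⟩ + |1⟩⊗|0⟩)/√2 (this is the performance operator of the fidelity test for uniformly distributed pure states on the equator of the Bloch sphere). Then the maximum of Tr[C Ω] over all separable positive semidefinite operators C on ℂ²⊗ℂ² with Tr_{A'}[C] = I₂ equals 3/4. Hence any average fidelity above 3/4 for the equatorial-state teleportation test certifies an advantage over all measure-and-prepare channels. -/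

import Mathlib

open Matrix Kronecker BigOperators ComplexOrder

noncomputable section

/-- A separable operator on `ℂ² ⊗ ℂ²`: a finite sum of tensor products of
positive semidefinite operators. -/
def Separable {d' d : ℕ} (C : Matrix (Fin d' × Fin d) (Fin d' × Fin d) ℂ) : Prop :=
  ∃ (n : ℕ) (A : Fin n → Matrix (Fin d') (Fin d') ℂ)
    (B : Fin n → Matrix (Fin d) (Fin d) ℂ),
    (∀ k, (A k).PosSemidef) ∧ (∀ k, (B k).PosSemidef) ∧ C = ∑ k, A k ⊗ₖ B k

/-- Partial trace over the first tensor factor. -/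
def trA' {d' d : ℕ} (C : Matrix (Fin d' × Fin d) (Fin d' × Fin d) ℂ) :
    Matrix (Fin d) (Fin d) ℂ :=
  Matrix.of fun i j => ∑ i', C (i', i) (i', j)

/-- Rank-one projector `|v⟩⟨v|` onto a vector. -/
def outer {ι : Type*} (v : ι → ℂ) : Matrix ι ι ℂ :=
  Matrix.vecMulVec v (star v)

/-- The two-qubit vector `|Ψ⁺⟩ = (|01⟩ + |10⟩)/√2`. -/
def psiPlus : Fin 2 × Fin 2 → ℂ :=
  fun p => if p.1 ≠ p.2 then ((Real.sqrt 2 : ℂ))⁻¹ else 0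

/-- The standard basis vectors of `ℂ²`. -/
def e0 : Fin 2 → ℂ := ![1, 0]
def e1 : Fin 2 → ℂ := ![0, 1]

/-- The performance operator of the equatorial-qubit fidelity test. -/
def eqOmega : Matrix (Fin 2 × Fin 2) (Fin 2 × Fin 2) ℂ :=
  ((4 : ℂ))⁻¹ • (outer e0 ⊗ₖ outer e0 + outer e1 ⊗ₖ outer e1 + (2 : ℂ) • outer psiPlus)

/-!
In the Pauli basis `Ω = (1/4) (1 + (σ₁ ⊗ σ₁ + σ₂ ⊗ σ₂) / 2)`, so on a product operator `A ⊗ B` the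
fidelity `Tr[(A ⊗ B) Ω]` is `(Tr A Tr B + A₀₁ B₁₀ + A₁₀ B₀₁) / 4`. For positive semidefinite `A` the
coherences satisfy `|A₀₁| ≤ Tr A / 2`, whence `Tr[(A ⊗ B) Ω] ≤ (3/8) Tr (A ⊗ B)`. Summing over a
separable decomposition and using `Tr C = Tr (Tr_{A'} C) = 2` gives the bound `3/4`. It is attained
by measuring in a basis of two antipodal equatorial states and preparing the state that was found.
-/

section PosSemidef

variable {n 𝕜 : Type*} [RCLike 𝕜] {A : Matrix n n 𝕜}

lemma norm_apply_sq_le_of_posSemidef (hA : A.PosSemidef) (i j : n) :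
    ‖A i j‖ ^ 2 ≤ RCLike.re (A i i) * RCLike.re (A j j) := by
  have minor_nonneg : 0 ≤ A i i * A j j - A i j * A j i := by
    simpa only [det_fin_two, submatrix_apply, cons_val_zero, cons_val_one] using
      (hA.submatrix ![i, j]).det_nonneg
  have hre := (RCLike.nonneg_iff.mp minor_nonneg).1
  have him : RCLike.im (A i i) = 0 := (RCLike.nonneg_iff.mp hA.diag_nonneg).2
  rw [← hA.isHermitian.apply j i, RCLike.star_def, RCLike.mul_conj, map_sub, RCLike.mul_re, him,
    zero_mul, sub_zero, ← RCLike.ofReal_pow, RCLike.ofReal_re] at hre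
  exact sub_nonneg.mp hre

lemma two_mul_norm_apply_le_of_posSemidef (hA : A.PosSemidef) (i j : n) :
    2 * ‖A i j‖ ≤ RCLike.re (A i i) + RCLike.re (A j j) := by
  have hi : 0 ≤ RCLike.re (A i i) := (RCLike.nonneg_iff.mp hA.diag_nonneg).1
  have hj : 0 ≤ RCLike.re (A j j) := (RCLike.nonneg_iff.mp hA.diag_nonneg).1
  refine le_of_sq_le_sq ?_ (add_nonneg hi hj)
  calc (2 * ‖A i j‖) ^ 2 = 4 * ‖A i j‖ ^ 2 := by ring
    _ ≤ 4 * (RCLike.re (A i i) * RCLike.re (A j j)) := by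
      gcongr
      exact norm_apply_sq_le_of_posSemidef hA i j
    _ ≤ (RCLike.re (A i i) + RCLike.re (A j j)) ^ 2 := by
      rw [← mul_assoc]
      exact four_mul_le_sq_add _ _

variable {m : Type*} [Fintype n] [Fintype m] {B : Matrix m m 𝕜}

lemma two_mul_norm_apply_le_re_trace_of_posSemidef (hA : A.PosSemidef) {i j : n} (hij : i ≠ j) :
    2 * ‖A i j‖ ≤ RCLike.re A.trace := by
  have re_diag_nonneg (k : n) : 0 ≤ RCLike.re (A k k) :=
    (RCLike.nonneg_iff.mp hA.diag_nonneg).1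
  calc 2 * ‖A i j‖ ≤ RCLike.re (A i i) + RCLike.re (A j j) :=
        two_mul_norm_apply_le_of_posSemidef hA i j
    _ ≤ ∑ k, RCLike.re (A k k) :=
        Finset.add_le_sum (fun k _ => re_diag_nonneg k) (Finset.mem_univ i) (Finset.mem_univ j) hij
    _ = RCLike.re A.trace := (map_sum RCLike.re _ _).symm

lemma re_trace_kronecker_of_posSemidef (hA : A.PosSemidef) (B : Matrix m m 𝕜) :
    RCLike.re (A ⊗ₖ B).trace = RCLike.re A.trace * RCLike.re B.trace := by
  rw [trace_kronecker, RCLike.mul_re, (RCLike.nonneg_iff.mp hA.trace_nonneg).2, zero_mul, sub_zero]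

lemma re_apply_mul_apply_le_re_trace_kronecker_of_posSemidef (hA : A.PosSemidef)
    (hB : B.PosSemidef) {i j : n} {k l : m} (hij : i ≠ j) (hkl : k ≠ l) :
    RCLike.re (A i j * B k l) ≤ RCLike.re (A ⊗ₖ B).trace / 4 := by
  have hA_off := two_mul_norm_apply_le_re_trace_of_posSemidef hA hij
  have hB_off := two_mul_norm_apply_le_re_trace_of_posSemidef hB hkl
  calc RCLike.re (A i j * B k l) ≤ ‖A i j‖ * ‖B k l‖ :=
        (RCLike.re_le_norm _).trans_eq (norm_mul _ _)
    _ = (2 * ‖A i j‖) * (2 * ‖B k l‖) / 4 := by ring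
    _ ≤ RCLike.re A.trace * RCLike.re B.trace / 4 := by
      have : 0 ≤ RCLike.re A.trace := (RCLike.nonneg_iff.mp hA.trace_nonneg).1
      gcongr
    _ = RCLike.re (A ⊗ₖ B).trace / 4 := by rw [re_trace_kronecker_of_posSemidef hA B]

end PosSemidef

lemma outer_apply {ι : Type*} (v : ι → ℂ) (i j : ι) : outer v i j = v i * star (v j) := rfl

section Separable

variable {d' d : ℕ}

lemma trace_trA' (C : Matrix (Fin d' × Fin d) (Fin d' × Fin d) ℂ) :
    (trA' C).trace = C.trace :=
  (Fintype.sum_prod_type_right fun p => C p p).symm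

lemma trA'_sum_kronecker {ι : Type*} [Fintype ι] (ρ : ι → Matrix (Fin d') (Fin d') ℂ)
    (P : ι → Matrix (Fin d) (Fin d) ℂ) :
    trA' (∑ k, ρ k ⊗ₖ P k) = ∑ k, (ρ k).trace • P k := by
  ext i j
  simp only [trA', of_apply, Matrix.sum_apply, Matrix.smul_apply, kronecker_apply, smul_eq_mul,
    trace, diag_apply, Finset.sum_mul]
  exact Finset.sum_comm

lemma Separable.posSemidef {C : Matrix (Fin d' × Fin d) (Fin d' × Fin d) ℂ} (hC : Separable C) :
    C.PosSemidef := by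
  obtain ⟨n, A, B, hA, hB, rfl⟩ := hC
  exact posSemidef_sum _ fun k _ => (hA k).kronecker (hB k)

lemma Separable.re_trace_mul_le {C Ω : Matrix (Fin d' × Fin d) (Fin d' × Fin d) ℂ} {c : ℝ}
    (hC : Separable C)
    (hΩ : ∀ (A : Matrix (Fin d') (Fin d') ℂ) (B : Matrix (Fin d) (Fin d) ℂ),
      A.PosSemidef → B.PosSemidef → ((A ⊗ₖ B) * Ω).trace.re ≤ c * (A ⊗ₖ B).trace.re) :
    (C * Ω).trace.re ≤ c * C.trace.re := by
  obtain ⟨n, A, B, hA, hB, rfl⟩ := hC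
  simp only [Finset.sum_mul, trace_sum, Complex.re_sum, Finset.mul_sum]
  exact Finset.sum_le_sum fun k _ => hΩ (A k) (B k) (hA k) (hB k)

end Separable

section Equatorial

lemma eqOmega_eq :
    eqOmega = (4⁻¹ : ℂ) • (1 + single 0 1 1 ⊗ₖ single 1 0 1 + single 1 0 1 ⊗ₖ single 0 1 1) := by
  have inv_sqrt_two_mul_self : ((√2 : ℝ) : ℂ)⁻¹ * ((√2 : ℝ) : ℂ)⁻¹ = 2⁻¹ := by
    rw [← mul_inv, ← Complex.ofReal_mul, Real.mul_self_sqrt zero_le_two, Complex.ofReal_ofNat]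
  ext ⟨i, i'⟩ ⟨j, j'⟩
  fin_cases i <;> fin_cases i' <;> fin_cases j <;> fin_cases j' <;>
    simp [eqOmega, outer_apply, psiPlus, e0, e1, one_apply, inv_sqrt_two_mul_self]

lemma trace_kronecker_mul_eqOmega (A B : Matrix (Fin 2) (Fin 2) ℂ) :
    ((A ⊗ₖ B) * eqOmega).trace =
      4⁻¹ * (A.trace * B.trace + A 1 0 * B 0 1 + A 0 1 * B 1 0) := by
  simp [eqOmega_eq, mul_add, ← mul_kronecker_mul, trace_kronecker, trace_mul_single]

lemma re_trace_kronecker_mul_eqOmega_le {A B : Matrix (Fin 2) (Fin 2) ℂ} (hA : A.PosSemidef)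
    (hB : B.PosSemidef) :
    ((A ⊗ₖ B) * eqOmega).trace.re ≤ 3 / 8 * (A ⊗ₖ B).trace.re := by
  have h₁₀ : (A 1 0 * B 0 1).re ≤ (A ⊗ₖ B).trace.re / 4 :=
    re_apply_mul_apply_le_re_trace_kronecker_of_posSemidef hA hB one_ne_zero zero_ne_one
  have h₀₁ : (A 0 1 * B 1 0).re ≤ (A ⊗ₖ B).trace.re / 4 :=
    re_apply_mul_apply_le_re_trace_kronecker_of_posSemidef hA hB zero_ne_one one_ne_zero
  rw [trace_kronecker_mul_eqOmega, ← trace_kronecker, ← Complex.ofReal_ofNat, ← Complex.ofReal_inv,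
    Complex.re_ofReal_mul, Complex.add_re, Complex.add_re]
  linarith

/-- The operator `|ψ⟩⟨ψ|` for `ψ = (|0⟩ + z|1⟩)/√2`, which for `‖z‖ = 1` is a pure qubit state on
the equator of the Bloch sphere; the normalization of `ψ` is pulled out as the factor `1/2`. Such
states make up the measurement and the preparations of the optimal channel. -/
def equatorialProj (z : ℂ) : Matrix (Fin 2) (Fin 2) ℂ :=
  (2⁻¹ : ℂ) • outer ![1, z]

lemma posSemidef_equatorialProj (z : ℂ) : (equatorialProj z).PosSemidef :=
  (posSemidef_vecMulVec_self_star _).smul (by positivity)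

variable {z : ℂ}

lemma equatorialProj_eq (hz : ‖z‖ = 1) :
    equatorialProj z = (2⁻¹ : ℂ) • !![1, star z; z, 1] := by
  ext i j
  fin_cases i <;> fin_cases j <;> simp [equatorialProj, outer_apply, Complex.mul_conj', hz]

lemma trace_equatorialProj (hz : ‖z‖ = 1) : (equatorialProj z).trace = 1 := by
  rw [equatorialProj_eq hz, trace_smul, trace_fin_two_of, smul_eq_mul]
  norm_num

lemma equatorialProj_add_neg (hz : ‖z‖ = 1) : equatorialProj z + equatorialProj (-z) = 1 := by
  rw [equatorialProj_eq hz, equatorialProj_eq ((norm_neg z).trans hz)]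
  ext i j
  fin_cases i <;> fin_cases j <;> norm_num

lemma trace_equatorialProj_kronecker_self_mul_eqOmega (hz : ‖z‖ = 1) :
    ((equatorialProj z ⊗ₖ equatorialProj z) * eqOmega).trace = 3 / 8 := by
  have mul_star_eq_one : z * star z = 1 := by simp [Complex.mul_conj', hz]
  rw [trace_kronecker_mul_eqOmega, trace_equatorialProj hz, equatorialProj_eq hz]
  simp only [Matrix.smul_apply, of_apply, cons_val_zero, cons_val_one, smul_eq_mul]
  linear_combination mul_star_eq_one / 8

end Equatorial

/-- fidelity benchmark for equatorial qubit states: the maximum of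
`Tr[C Ω]` over separable positive semidefinite `C` on `ℂ²⊗ℂ²` with `Tr_{A'}[C] = I`
equals `3/4`, where `Ω` is the performance operator of the equatorial-state
fidelity test. -/
theorem equatorial_benchmark :
    IsGreatest
      { s : ℝ | ∃ C : Matrix (Fin 2 × Fin 2) (Fin 2 × Fin 2) ℂ,
          Separable C ∧ C.PosSemidef ∧ trA' C = 1 ∧
          s = ((C * eqOmega).trace).re }
      (3 / 4 : ℝ) := by
  constructor
  · let P : Fin 2 → Matrix (Fin 2) (Fin 2) ℂ := ![equatorialProj 1, equatorialProj (-1)]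
    have posSemidef_P : ∀ k, (P k).PosSemidef :=
      Fin.forall_fin_two.mpr ⟨posSemidef_equatorialProj 1, posSemidef_equatorialProj (-1)⟩
    have separable_sum : Separable (∑ k, P k ⊗ₖ P k) :=
      ⟨2, P, P, posSemidef_P, posSemidef_P, rfl⟩
    refine ⟨_, separable_sum, separable_sum.posSemidef, ?_, ?_⟩
    · rw [trA'_sum_kronecker]
      simp [P, trace_equatorialProj, equatorialProj_add_neg]
    · norm_num [P, add_mul, trace_equatorialProj_kronecker_self_mul_eqOmega]
  · rintro _ ⟨C, hC, -, trA'_C, rfl⟩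
    calc ((C * eqOmega).trace).re ≤ 3 / 8 * C.trace.re :=
          hC.re_trace_mul_le fun _ _ => re_trace_kronecker_mul_eqOmega_le
      _ = 3 / 4 := by
          rw [← trace_trA', trA'_C, trace_one]
          norm_num

end
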